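/- arXiv:1112.1978 — 3 statements merged into one kernel-verified Lean document; each statement's English description precedes it below -/
import Mathlib

section
/- Let G = (V,E) be a finite simple graph (in particular, without loops) that is (k,l)-anonymous of type II for positive integers k and l, and suppose there exists a vertex of G of degree at least l. Then k + l ≤ |V|. -/
/-- A finite simple graph is `(k,l)`-anonymous of type II if for every vertex `v` and every
subset `S` of `N(v)` with `|S| ≤ l`, at least `k` vertices `u` satisfy `S ⊆ N(u)`. -/
def klAnonymousII {V : Type*} (G : SimpleGraph V) (k l : ℕ) : Prop :=
  ∀ v : V, ∀ S : Set V, S ⊆ G.neighborSet v → S.ncard ≤ l →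
    k ≤ {u : V | S ⊆ G.neighborSet u}.ncard

section

variable {V : Type*} (G : SimpleGraph V) (S : Set V)

lemma disjoint_setOf_subset_neighborSet : Disjoint {u | S ⊆ G.neighborSet u} S :=
  Set.disjoint_left.mpr fun _ hSu hu ↦ G.notMem_neighborSet_self (hSu hu)

lemma ncard_setOf_subset_neighborSet_add_ncard_le [Finite V] :
    {u | S ⊆ G.neighborSet u}.ncard + S.ncard ≤ Nat.card V := by
  rw [← Set.ncard_union_eq (disjoint_setOf_subset_neighborSet G S)]
  exact Set.ncard_le_card _

end

theorem stmt_4 {V : Type*} [Fintype V] (G : SimpleGraph V) (k l : ℕ)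
    (hk : 1 ≤ k) (hl : 1 ≤ l) (hanon : klAnonymousII G k l)
    (hdeg : ∃ v : V, l ≤ (G.neighborSet v).ncard) :
    k + l ≤ Fintype.card V := by
  obtain ⟨v, hv⟩ := hdeg
  obtain ⟨S, hSv, hS⟩ := Set.exists_subset_card_eq hv
  calc
    k + l ≤ {u | S ⊆ G.neighborSet u}.ncard + S.ncard :=
      add_le_add (hanon v S hSv hS.le) hS.ge
    _ ≤ Nat.card V := ncard_setOf_subset_neighborSet_add_ncard_le G S
    _ = Fintype.card V := Nat.card_eq_fintype_card
end

section
/- For all integers n and k with 2 ≤ k ≤ n, the complete graph K_n on n vertices is NOT (k, n−k+1)-anonymous of type II; that is, the bound l ≤ n − k for (k,l)-anonymity of type II of K_n is attained and sharp. -/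
section CompleteGraph

variable {V : Type*} {k l : ℕ}

theorem subset_neighborSet_top_iff {S : Set V} {v : V} :
    S ⊆ (⊤ : SimpleGraph V).neighborSet v ↔ v ∉ S := by
  rw [SimpleGraph.neighborSet_top, Set.subset_compl_singleton_iff]

theorem klAnonymousII_top_iff_forall_ne_univ :
    klAnonymousII (⊤ : SimpleGraph V) k l ↔
      ∀ S : Set V, S ≠ Set.univ → S.ncard ≤ l → k ≤ Sᶜ.ncard := by
  simp only [klAnonymousII, subset_neighborSet_top_iff, Set.ne_univ_iff_exists_notMem,
    forall_exists_index]
  exact forall_comm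

theorem stmt_8_general [Finite V] [Nonempty V] :
    klAnonymousII (⊤ : SimpleGraph V) k l ↔ k ≤ 1 ∨ k + l ≤ Nat.card V := by
  rw [klAnonymousII_top_iff_forall_ne_univ]
  constructor
  · intro h
    have card_pos : 0 < Nat.card V := Nat.card_pos
    -- A set of the largest size the definition tests leaves the fewest common neighbours.
    have size_le : min l (Nat.card V - 1) ≤ (Set.univ : Set V).ncard := by
      rw [Set.ncard_univ]
      omega
    obtain ⟨S, -, card_S⟩ := Set.exists_subset_card_eq size_le
    have S_ne_univ : S ≠ Set.univ := by
      rw [Ne, Set.eq_univ_iff_ncard]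
      omega
    have k_le : k ≤ Sᶜ.ncard := h S S_ne_univ (by omega)
    have card_add : S.ncard + Sᶜ.ncard = Nat.card V := S.ncard_add_ncard_compl
    omega
  · intro h S S_ne_univ card_S
    have compl_pos : 0 < Sᶜ.ncard := (Set.nonempty_compl.2 S_ne_univ).ncard_pos
    have card_add : S.ncard + Sᶜ.ncard = Nat.card V := S.ncard_add_ncard_compl
    omega

end CompleteGraph

theorem stmt_8 (n k : ℕ) (hk : 2 ≤ k) (hkn : k ≤ n) :
    ¬ klAnonymousII (⊤ : SimpleGraph (Fin n)) k (n - k + 1) := by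
  have : NeZero n := ⟨by omega⟩
  rw [stmt_8_general, Nat.card_fin]
  omega
end

section
/- For all integers k, l, m with k ≥ l ≥ 1 and m ≥ max(k, 3), the graph G(k,l,m) is Feder-(k,l)-anonymous. -/
/-- The graph `G(k,l,m)` of Feder et al.'s criticism: a clique on `v_0,…,v_{k-1}`
(the `Sum.inl` vertices), a cycle on `u_0,…,u_{m-1}` (the `Sum.inr` vertices), and
edges joining every cycle vertex `u_i` to the clique vertices `v_0,…,v_{l-1}`. -/
def Gklm (k l m : ℕ) : SimpleGraph (Fin k ⊕ Fin m) where
  Adj x y :=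
    match x, y with
    | Sum.inl i, Sum.inl j => i ≠ j
    | Sum.inl j, Sum.inr _ => (j : ℕ) < l
    | Sum.inr _, Sum.inl j => (j : ℕ) < l
    | Sum.inr i, Sum.inr j =>
        i ≠ j ∧ ((j : ℕ) = ((i : ℕ) + 1) % m ∨ (i : ℕ) = ((j : ℕ) + 1) % m)
  symm := by
    constructor
    rintro (i | i) (j | j) h
    · exact h.symm
    · exact h
    · exact h
    · exact ⟨h.1.symm, h.2.symm⟩
  loopless := by
    constructor
    rintro (i | i) h
    · exact h rfl
    · exact h.1 rfl

/-- A finite simple graph is Feder-`(k,l)`-anonymous if for every vertex `v` there is a set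
`U` of at least `k` vertices, not containing `v`, such that every `u ∈ U` shares at least
`l` neighbors with `v`. -/
def federAnonymous {V : Type*} (G : SimpleGraph V) (k l : ℕ) : Prop :=
  ∀ v : V, ∃ U : Set V, v ∉ U ∧ k ≤ U.ncard ∧
    ∀ u ∈ U, l ≤ (G.neighborSet u ∩ G.neighborSet v).ncard

/-!
The hubs `v_0, …, v_{l-1}` are adjacent to every cycle vertex and to one another, so two cycle
vertices share all `l` of them. A cycle vertex `u` and a clique vertex `v` share all hubs if `v` is
not a hub; if `v` is a hub, the loss of `v` itself is made up for by a neighbor of `u` on the cycle.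
Hence a cycle vertex has `l` common neighbors with every other vertex, which gives a clique vertex
`m` partners and a cycle vertex `k + m - 1`.
-/

theorem federAnonymous.mono {V : Type*} {G : SimpleGraph V} {k k' l l' : ℕ}
    (hG : federAnonymous G k l) (hk : k' ≤ k) (hl : l' ≤ l) : federAnonymous G k' l' := by
  intro v
  obtain ⟨U, hvU, hU, hcommon⟩ := hG v
  exact ⟨U, hvU, hk.trans hU, fun u hu => hl.trans (hcommon u hu)⟩

namespace Gklm

variable {k l m : ℕ}

/-- The clique vertices `v_0, …, v_{l-1}`, which are the ones adjacent to the cycle, as a set of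
vertices of `Gklm k l m`. -/
def hubs (k l m : ℕ) : Set (Fin k ⊕ Fin m) :=
  Sum.inl '' {j | (j : ℕ) < l}

theorem ncard_hubs (hkl : l ≤ k) : (hubs k l m).ncard = l := by
  rw [hubs, Set.ncard_image_of_injective _ Sum.inl_injective, ← Fin.range_castLE hkl,
    Set.ncard_range_of_injective (Fin.castLE_injective hkl), Nat.card_fin]

theorem inr_notMem_hubs (i : Fin m) : Sum.inr i ∉ hubs k l m := by
  simp [hubs]

theorem hubs_subset_neighborSet_inr (i : Fin m) :
    hubs k l m ⊆ (Gklm k l m).neighborSet (Sum.inr i) := by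
  rintro _ ⟨j, hj, rfl⟩
  exact hj

theorem hubs_sdiff_singleton_subset_neighborSet_inl (j : Fin k) :
    hubs k l m \ {Sum.inl j} ⊆ (Gklm k l m).neighborSet (Sum.inl j) := by
  rintro _ ⟨⟨j', -, rfl⟩, hne⟩ rfl
  exact hne rfl

theorem exists_adj_inr_inr (hm : 2 ≤ m) (i : Fin m) :
    ∃ i' : Fin m, (Gklm k l m).Adj (Sum.inr i) (Sum.inr i') := by
  refine ⟨⟨(i + 1) % m, Nat.mod_lt _ (by lia)⟩, fun h => ?_, Or.inl rfl⟩
  have hmod : (i : ℕ) + 0 ≡ i + 1 [MOD m] := by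
    rw [Nat.ModEq, add_zero, Nat.mod_eq_of_lt i.isLt]
    exact congrArg Fin.val h
  have : m = 1 := by simpa using (Nat.modEq_iff_dvd' zero_le_one).1 hmod.add_left_cancel'
  lia

theorem le_ncard_commonNeighbors_inr_inr (hkl : l ≤ k) (i i' : Fin m) :
    l ≤ ((Gklm k l m).commonNeighbors (Sum.inr i) (Sum.inr i')).ncard := by
  calc
    l = (hubs k l m).ncard := (ncard_hubs hkl).symm
    _ ≤ _ := Set.ncard_le_ncard
      (Set.subset_inter (hubs_subset_neighborSet_inr i) (hubs_subset_neighborSet_inr i'))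

theorem le_ncard_commonNeighbors_inl_inr (hkl : l ≤ k) (hm : 2 ≤ m) (j : Fin k) (i : Fin m) :
    l ≤ ((Gklm k l m).commonNeighbors (Sum.inl j) (Sum.inr i)).ncard := by
  have hsdiff : hubs k l m \ {Sum.inl j} ⊆
      (Gklm k l m).commonNeighbors (Sum.inl j) (Sum.inr i) :=
    Set.subset_inter (hubs_sdiff_singleton_subset_neighborSet_inl j)
      (Set.sdiff_subset.trans (hubs_subset_neighborSet_inr i))
  by_cases hj : Sum.inl j ∈ hubs k l m
  · obtain ⟨i', hi'⟩ := exists_adj_inr_inr (k := k) (l := l) hm i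
    have hmem : Sum.inr i' ∈ (Gklm k l m).commonNeighbors (Sum.inl j) (Sum.inr i) :=
      ⟨(Gklm k l m).adj_symm (hubs_subset_neighborSet_inr i' hj), hi'⟩
    calc
      l = (insert (Sum.inr i') (hubs k l m \ {Sum.inl j})).ncard := by
        rw [Set.ncard_exchange (inr_notMem_hubs i') hj, ncard_hubs hkl]
      _ ≤ _ := Set.ncard_le_ncard (Set.insert_subset hmem hsdiff)
  · rw [Set.sdiff_singleton_eq_self hj] at hsdiff
    exact (ncard_hubs hkl).symm.trans_le (Set.ncard_le_ncard hsdiff)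

theorem le_ncard_commonNeighbors_inr (hkl : l ≤ k) (hm : 2 ≤ m) (x : Fin k ⊕ Fin m)
    (i : Fin m) : l ≤ ((Gklm k l m).commonNeighbors x (Sum.inr i)).ncard := by
  rcases x with j | i'
  · exact le_ncard_commonNeighbors_inl_inr hkl hm j i
  · exact le_ncard_commonNeighbors_inr_inr hkl i' i

end Gklm

theorem stmt_13_general {k l m : ℕ} (hk : 1 ≤ k) (hkl : l ≤ k) (hm : 2 ≤ m) :
    federAnonymous (Gklm k l m) m l := by
  rintro (j | i)
  · refine ⟨Set.range Sum.inr, by simp, ?_, ?_⟩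
    · rw [Set.ncard_range_of_injective Sum.inr_injective, Nat.card_fin]
    · rintro _ ⟨i, rfl⟩
      rw [Set.inter_comm]
      exact Gklm.le_ncard_commonNeighbors_inr hkl hm (Sum.inl j) i
  · refine ⟨{Sum.inr i}ᶜ, by simp, ?_, ?_⟩
    · rw [Set.ncard_compl, Set.ncard_singleton, Nat.card_sum, Nat.card_fin, Nat.card_fin]
      lia
    · intro x _
      exact Gklm.le_ncard_commonNeighbors_inr hkl hm x i

theorem stmt_13 (k l m : ℕ) (hkl : l ≤ k) (hl : 1 ≤ l) (hm : max k 3 ≤ m) :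
    federAnonymous (Gklm k l m) k l :=
  (stmt_13_general (by lia) hkl (by lia)).mono (by lia) le_rfl
end
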